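/- Let N ≥ 2 be an integer and s ∈ (1/2, 1). For every ρ ∈ (0, 1) there exists K_ρ > 0 such that for every radial u ∈ C_c^∞(B) with support contained in the closed ball of radius ρ centered at the origin: Q_{N,s,B}(u) ≥ S_{N,s}(ℝ^N)·‖u‖²_{L^{2*_s}(B)} − K_ρ·‖u‖²_{L²(B)}; moreover one can take K_ρ = a_{N,s}·(1−ρ)^{−2s} for a constant a_{N,s} depending only on N and s. -/

import Mathlib

open MeasureTheory Real Filter Topology Set

noncomputable section

/-- Euclidean space ℝ^N. -/
abbrev Euc (N : ℕ) := EuclideanSpace ℝ (Fin N)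

/-- The normalization constant c_{N,s}. -/
def cNs (N : ℕ) (s : ℝ) : ℝ :=
  s * (4 : ℝ) ^ s * Real.Gamma (((N : ℝ) + 2 * s) / 2) /
    (Real.pi ^ ((N : ℝ) / 2) * Real.Gamma (1 - s))

/-- The Gagliardo quadratic form Q_{N,s,U}. -/
def gagliardo (N : ℕ) (s : ℝ) (U : Set (Euc N)) (u : Euc N → ℝ) : ℝ :=
  (cNs N s / 2) * ∫ x in U, ∫ y in U, (u x - u y) ^ 2 / ‖x - y‖ ^ ((N : ℝ) + 2 * s)

/-- The L^p norm of u on a set U. -/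
def lpNormOn (N : ℕ) (p : ℝ) (U : Set (Euc N)) (u : Euc N → ℝ) : ℝ :=
  (∫ x in U, |u x| ^ p) ^ (1 / p)

/-- The fractional critical Sobolev exponent 2*_s = 2N/(N-2s). -/
def critExp (N : ℕ) (s : ℝ) : ℝ := 2 * (N : ℝ) / ((N : ℝ) - 2 * s)

/-- Smooth compactly supported test function in U. -/
def testFun (N : ℕ) (U : Set (Euc N)) (u : Euc N → ℝ) : Prop :=
  ContDiff ℝ (⊤ : ℕ∞) u ∧ HasCompactSupport u ∧ tsupport u ⊆ U

/-- The critical fractional Sobolev constant S_{N,s}(U). -/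
def sobolevConst (N : ℕ) (s : ℝ) (U : Set (Euc N)) : ℝ :=
  sInf { r | ∃ u, testFun N U u ∧ ¬ (∀ x, u x = 0) ∧
    r = gagliardo N s U u / (lpNormOn N (critExp N s) U u) ^ 2 }

/-- The open cylinder B'_r × (-r, r) in ℝ^{N-1} × ℝ. -/
def cylinder (N : ℕ) (r : ℝ) : Set (EuclideanSpace ℝ (Fin (N - 1)) × ℝ) :=
  (Metric.ball 0 r) ×ˢ (Set.Ioo (-r) r)

/-- A bounded open set is Lipschitz: near each boundary point the boundary is the
bi-Lipschitz image of a flat piece. -/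
def IsLipschitzSet (N : ℕ) (Ω : Set (Euc N)) : Prop :=
  ∀ q ∈ frontier Ω, ∃ (r C : ℝ) (Φ : EuclideanSpace ℝ (Fin (N - 1)) × ℝ → Euc N),
    0 < r ∧ 1 < C ∧
    (∀ x ∈ cylinder N r, ∀ y ∈ cylinder N r,
      C⁻¹ * dist x y ≤ dist (Φ x) (Φ y) ∧ dist (Φ x) (Φ y) ≤ C * dist x y) ∧
    IsOpen (Φ '' cylinder N r) ∧ q ∈ Φ '' cylinder N r ∧
    Φ '' ((Metric.ball 0 r) ×ˢ (Set.Ioo 0 r)) ⊆ Ω ∧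
    Φ '' ((Metric.ball 0 r) ×ˢ ({0} : Set ℝ)) ⊆ frontier Ω

/-- Membership in H^s_0(U): approximation by smooth compactly supported functions
in L²(U) and in the Gagliardo form. -/
def memHs0 (N : ℕ) (s : ℝ) (U : Set (Euc N)) (u : Euc N → ℝ) : Prop :=
  ∃ v : ℕ → Euc N → ℝ, (∀ k, testFun N U (v k)) ∧
    Tendsto (fun k => ∫ x in U, (v k x - u x) ^ 2) atTop (nhds 0) ∧
    Tendsto (fun k => gagliardo N s U (fun x => v k x - u x)) atTop (nhds 0)

/-- A radial function on ℝ^N. -/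
def IsRadial (N : ℕ) (u : Euc N → ℝ) : Prop :=
  ∀ x y : Euc N, ‖x‖ = ‖y‖ → u x = u y

/-- The open unit ball of ℝ^N. -/
def unitBall (N : ℕ) : Set (Euc N) := Metric.ball 0 1

/-- The radial critical Sobolev constant S_{N,s,rad}(B,h) on the unit ball. -/
def sobolevConstRad (N : ℕ) (s : ℝ) (h : Euc N → ℝ) : ℝ :=
  sInf { r | ∃ u, testFun N (unitBall N) u ∧ IsRadial N u ∧ ¬ (∀ x, u x = 0) ∧
    r = (gagliardo N s (unitBall N) u + ∫ x in unitBall N, h x * (u x) ^ 2) /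
        (lpNormOn N (critExp N s) (unitBall N) u) ^ 2 }

/-- Membership in H^s_{0,rad}(B): radial, approximated by radial test functions. -/
def memHs0rad (N : ℕ) (s : ℝ) (u : Euc N → ℝ) : Prop :=
  IsRadial N u ∧ ∃ v : ℕ → Euc N → ℝ,
    (∀ k, testFun N (unitBall N) (v k) ∧ IsRadial N (v k)) ∧
    Tendsto (fun k => ∫ x in unitBall N, (v k x - u x) ^ 2) atTop (nhds 0) ∧
    Tendsto (fun k => gagliardo N s (unitBall N) (fun x => v k x - u x)) atTop (nhds 0)

/-- The fractional Laplacian of a test function. -/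
def fracLap (N : ℕ) (s : ℝ) (φ : Euc N → ℝ) (x : Euc N) : ℝ :=
  (cNs N s / 2) * ∫ z : Euc N, (2 * φ x - φ (x + z) - φ (x - z)) / ‖z‖ ^ ((N : ℝ) + 2 * s)

/-- The auxiliary kernel `min(1,|z|²)/|z|^{N+2s}`. -/
def auxKer (N : ℕ) (s : ℝ) (z : Euc N) : ℝ := min 1 (‖z‖ ^ 2) / ‖z‖ ^ ((N : ℝ) + 2 * s)

lemma auxKer_nonneg (N : ℕ) (s : ℝ) (z : Euc N) : 0 ≤ auxKer N s z := by
  unfold auxKer; positivity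

lemma auxKer_integrable (N : ℕ) (hN : 2 ≤ N) (s : ℝ) (hs : s ∈ Set.Ioo (1/2 : ℝ) 1) :
    Integrable (auxKer N s) := by
  obtain ⟨h1, h2⟩ := hs
  have : Nontrivial (Euc N) := by
    apply Module.nontrivial_of_finrank_pos (R := ℝ)
    rw [finrank_euclideanSpace_fin]; omega
  have key := (integrable_fun_norm_addHaar (μ := (volume : Measure (Euc N)))
    (f := fun r : ℝ => min 1 (r ^ 2) / r ^ ((N : ℝ) + 2 * s))).2
  apply key
  rw [finrank_euclideanSpace_fin]
  have hpow : ∀ r : ℝ, 0 < r → r ^ (N - 1) * (1 / r ^ ((N : ℝ) + 2 * s)) = r ^ (-1 - 2 * s) := by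
    intro r hr
    rw [one_div, ← Real.rpow_neg hr.le, ← Real.rpow_natCast, ← Real.rpow_add hr]
    congr 1
    rw [Nat.cast_sub (by omega)]; push_cast; ring
  have hmeas : Measurable (fun r : ℝ => r ^ (N - 1) • (min 1 (r ^ 2) / r ^ ((N : ℝ) + 2 * s))) := by
    simp only [smul_eq_mul]
    fun_prop
  rw [← Ioc_union_Ioi_eq_Ioi (zero_le_one (α := ℝ))]
  apply IntegrableOn.union
  · have hi : IntegrableOn (fun r : ℝ => r ^ (1 - 2 * s)) (Ioc 0 1) := by
      rw [← intervalIntegrable_iff_integrableOn_Ioc_of_le zero_le_one]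
      exact intervalIntegral.intervalIntegrable_rpow' (by linarith)
    refine Integrable.mono' hi hmeas.aestronglyMeasurable ?_
    refine ae_restrict_of_forall_mem measurableSet_Ioc fun r hr => ?_
    have hr0 : 0 < r := hr.1
    rw [Real.norm_of_nonneg (by simp only [smul_eq_mul]; positivity), smul_eq_mul]
    calc r ^ (N - 1) * (min 1 (r ^ 2) / r ^ ((N : ℝ) + 2 * s))
        ≤ r ^ (N - 1) * (r ^ 2 / r ^ ((N : ℝ) + 2 * s)) := by
          gcongr; exact min_le_right _ _
      _ = (r ^ (N - 1) * (1 / r ^ ((N : ℝ) + 2 * s))) * r ^ 2 := by ring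
      _ = r ^ (1 - 2 * s) := by
          rw [hpow r hr0, ← Real.rpow_natCast, ← Real.rpow_add hr0]
          congr 1; push_cast; ring
  · have hi : IntegrableOn (fun r : ℝ => r ^ (-1 - 2 * s)) (Ioi 1) :=
      integrableOn_Ioi_rpow_of_lt (by linarith) one_pos
    refine Integrable.mono' hi hmeas.aestronglyMeasurable ?_
    refine ae_restrict_of_forall_mem measurableSet_Ioi fun r hr => ?_
    have hr0 : 0 < r := lt_trans one_pos hr
    rw [Real.norm_of_nonneg (by simp only [smul_eq_mul]; positivity), smul_eq_mul]
    calc r ^ (N - 1) * (min 1 (r ^ 2) / r ^ ((N : ℝ) + 2 * s))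
        ≤ r ^ (N - 1) * (1 / r ^ ((N : ℝ) + 2 * s)) := by
          gcongr; exact min_le_left _ _
      _ = _ := hpow r hr0

lemma conv_pair {N : ℕ} {f g : Euc N → ℝ} (hf : Integrable f) (hg : Integrable g) :
    Integrable (fun p : Euc N × Euc N => f p.2 * g (p.1 - p.2)) ∧
    ∫ p : Euc N × Euc N, f p.2 * g (p.1 - p.2) = (∫ x, f x) * ∫ x, g x := by
  have h1 : Integrable (fun p : Euc N × Euc N => f p.2 * g (p.1 - p.2)) := by
    have h := Integrable.convolution_integrand (ContinuousLinearMap.mul ℝ ℝ) hf hg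
    simp only [ContinuousLinearMap.mul_apply'] at h
    exact h
  refine ⟨h1, ?_⟩
  have h2 := integral_convolution (ContinuousLinearMap.mul ℝ ℝ) hf hg
  simp only [convolution, ContinuousLinearMap.mul_apply'] at h2
  rw [← h2]
  exact integral_prod _ h1

lemma conv_pair_swap {N : ℕ} {f g : Euc N → ℝ} (hf : Integrable f) (hg : Integrable g) :
    Integrable (fun p : Euc N × Euc N => f p.1 * g (p.2 - p.1)) ∧
    ∫ p : Euc N × Euc N, f p.1 * g (p.2 - p.1) = (∫ x, f x) * ∫ x, g x := by
  obtain ⟨h1, h2⟩ := conv_pair hf hg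
  refine ⟨h1.swap, ?_⟩
  rw [← h2]
  exact integral_prod_swap (fun p : Euc N × Euc N => f p.2 * g (p.1 - p.2))

/-- The Gagliardo integrand of a test function is integrable on the product. -/
lemma gag_integrable (N : ℕ) (hN : 2 ≤ N) (s : ℝ) (hs : s ∈ Set.Ioo (1/2 : ℝ) 1)
    (u : Euc N → ℝ) (hu : ContDiff ℝ (⊤ : ℕ∞) u) (hc : HasCompactSupport u) :
    Integrable (fun p : Euc N × Euc N =>
      (u p.1 - u p.2) ^ 2 / ‖p.1 - p.2‖ ^ ((N : ℝ) + 2 * s)) := by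
  obtain ⟨L, hL⟩ := hu.lipschitzWith_of_hasCompactSupport hc (by simp)
  obtain ⟨M, hM⟩ := hc.exists_bound_of_continuous hu.continuous
  set C : ℝ := max ((L : ℝ) ^ 2) (4 * M ^ 2) with hC
  have hC0 : 0 ≤ C := le_max_of_le_left (by positivity)
  have hg := auxKer_integrable N hN s hs
  have hf : Integrable ((tsupport u).indicator (fun _ => C)) := by
    refine (integrable_indicator_iff (isClosed_tsupport u).measurableSet).2 ?_
    exact integrableOn_const (hs := hc.isCompact.measure_lt_top.ne)
  have hb := (conv_pair hf hg).1.add (conv_pair_swap hf hg).1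
  have hcu := hu.continuous
  refine hb.mono' ?_ (Eventually.of_forall ?_)
  · refine Measurable.aestronglyMeasurable ?_
    have := hcu.measurable
    fun_prop
  · rintro ⟨x, y⟩
    rw [Real.norm_of_nonneg (by positivity)]
    simp only [Pi.add_apply]
    have hsym : auxKer N s (y - x) = auxKer N s (x - y) := by
      unfold auxKer; rw [norm_sub_rev]
    rw [hsym]
    have hind : ∀ z, 0 ≤ (tsupport u).indicator (fun _ => C) z := fun z =>
      Set.indicator_nonneg (fun _ _ => hC0) z
    have hk := auxKer_nonneg N s (x - y)
    have hmain : (u x - u y) ^ 2 / ‖x - y‖ ^ ((N : ℝ) + 2 * s) ≤ C * auxKer N s (x - y) := by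
      unfold auxKer
      rw [← mul_div_assoc]
      gcongr
      have e1 : (u x - u y) ^ 2 ≤ C := by
        refine le_trans ?_ (le_max_right _ _)
        have := abs_le.1 (hM x); have := abs_le.1 (hM y)
        nlinarith
      have e2 : (u x - u y) ^ 2 ≤ C * ‖x - y‖ ^ 2 := by
        have h := hL.dist_le_mul x y
        rw [Real.dist_eq, dist_eq_norm] at h
        calc (u x - u y) ^ 2 = |u x - u y| ^ 2 := (sq_abs _).symm
          _ ≤ (L * ‖x - y‖) ^ 2 := by gcongr
          _ = L ^ 2 * ‖x - y‖ ^ 2 := by ring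
          _ ≤ C * ‖x - y‖ ^ 2 := by gcongr; exact le_max_left _ _
      rcases min_choice (1 : ℝ) (‖x - y‖ ^ 2) with h | h <;> rw [h]
      · simpa using e1
      · exact e2
    by_cases hx : x ∈ tsupport u
    · rw [Set.indicator_of_mem hx]
      have := mul_nonneg (hind y) hk
      linarith
    · by_cases hy : y ∈ tsupport u
      · rw [Set.indicator_of_mem hy]
        have := mul_nonneg (hind x) hk
        linarith
      · rw [image_eq_zero_of_notMem_tsupport hx, image_eq_zero_of_notMem_tsupport hy]
        have := mul_nonneg (hind x) hk
        have := mul_nonneg (hind y) hk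
        simp only [sub_self, ne_eq, OfNat.ofNat_ne_zero, not_false_eq_true, zero_pow, zero_div]
        linarith

lemma auxKer_far (N : ℕ) (s δ : ℝ) (hδ : 0 < δ) (z : Euc N) (hz : δ ≤ ‖z‖) :
    1 / ‖z‖ ^ ((N : ℝ) + 2 * s) = δ ^ (-((N : ℝ) + 2 * s)) * auxKer N s (δ⁻¹ • z) := by
  have hz0 : 0 < ‖z‖ := lt_of_lt_of_le hδ hz
  unfold auxKer
  rw [norm_smul, Real.norm_of_nonneg (by positivity)]
  have h1 : 1 ≤ δ⁻¹ * ‖z‖ := by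
    rw [inv_mul_eq_div, le_div_iff₀ hδ]; linarith
  rw [min_eq_left (one_le_pow₀ h1), Real.mul_rpow (by positivity) hz0.le,
    Real.rpow_neg hδ.le, Real.inv_rpow hδ.le]
  have : 0 < δ ^ ((N : ℝ) + 2 * s) := by positivity
  field_simp

lemma cNs_pos (N : ℕ) (s : ℝ) (hs : s ∈ Set.Ioo (1/2 : ℝ) 1) : 0 < cNs N s := by
  obtain ⟨h1, h2⟩ := hs
  have h3 : 0 < s := by linarith
  have g1 : 0 < Real.Gamma (((N : ℝ) + 2 * s) / 2) := Real.Gamma_pos_of_pos (by positivity)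
  have g2 : 0 < Real.Gamma (1 - s) := Real.Gamma_pos_of_pos (by linarith)
  unfold cNs
  positivity

lemma gag_compare (N : ℕ) (hN : 2 ≤ N) (s : ℝ) (hs : s ∈ Set.Ioo (1/2 : ℝ) 1)
    (ρ : ℝ) (hρ : ρ ∈ Set.Ioo (0 : ℝ) 1) (u : Euc N → ℝ) (hu : testFun N (unitBall N) u)
    (hsupp : tsupport u ⊆ Metric.closedBall (0 : Euc N) ρ) :
    gagliardo N s Set.univ u ≤ gagliardo N s (unitBall N) u +
      cNs N s * (∫ z, auxKer N s z) * (1 - ρ) ^ (-(2 * s)) * ∫ x in unitBall N, (u x) ^ 2 := by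
  obtain ⟨hcd, hcs, hsub⟩ := hu
  have hk := gag_integrable N hN s hs u hcd hcs
  set δ : ℝ := 1 - ρ with hδ
  have hδ0 : 0 < δ := by have := hρ.2; linarith
  have hB : MeasurableSet (unitBall N) := measurableSet_ball
  have hout : ∀ x, x ∉ unitBall N → u x = 0 := fun x hx =>
    image_eq_zero_of_notMem_tsupport fun h => hx (hsub h)
  have hu2 : Integrable (fun x => (u x) ^ 2) := by
    have hcs2 : HasCompactSupport (fun x => (u x) ^ 2) := by
      refine hcs.mono fun x hx hx0 => hx ?_
      simp [hx0]
    exact (hcd.continuous.pow 2).integrable_of_hasCompactSupport hcs2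
  have hu2B : ∫ x in unitBall N, (u x) ^ 2 = ∫ x, (u x) ^ 2 := by
    apply setIntegral_eq_integral_of_forall_compl_eq_zero
    intro x hx; rw [hout x hx]; simp
  set g : Euc N → ℝ := fun z => δ ^ (-((N : ℝ) + 2 * s)) * auxKer N s (δ⁻¹ • z) with hgdef
  have hg : Integrable g :=
    ((auxKer_integrable N hN s hs).comp_smul (inv_ne_zero hδ0.ne')).const_mul _
  have hgnn : ∀ z, 0 ≤ g z := fun z => mul_nonneg (by positivity) (auxKer_nonneg N s _)
  have hgsym : ∀ x y : Euc N, g (y - x) = g (x - y) := by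
    intro x y; simp only [hgdef, auxKer, norm_smul, norm_sub_rev]
  have hgint : ∫ z, g z = δ ^ (-(2 * s)) * ∫ z, auxKer N s z := by
    simp only [hgdef]
    rw [integral_const_mul, Measure.integral_comp_smul, finrank_euclideanSpace_fin, smul_eq_mul,
      ← mul_assoc]
    congr 1
    rw [inv_pow, inv_inv, abs_of_pos (by positivity), ← Real.rpow_natCast, ← Real.rpow_add hδ0]
    congr 1; ring
  obtain ⟨i1, e1⟩ := conv_pair hu2 hg
  obtain ⟨i2, e2⟩ := conv_pair_swap hu2 hg
  set k : Euc N × Euc N → ℝ := fun p =>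
    (u p.1 - u p.2) ^ 2 / ‖p.1 - p.2‖ ^ ((N : ℝ) + 2 * s) with hkdef
  have hBB : MeasurableSet (unitBall N ×ˢ unitBall N) := hB.prod hB
  have hpt : ∀ p, k p ≤ (unitBall N ×ˢ unitBall N).indicator k p +
      ((u p.2) ^ 2 * g (p.1 - p.2) + (u p.1) ^ 2 * g (p.2 - p.1)) := by
    have far : ∀ x y : Euc N, y ∉ unitBall N →
        (u x) ^ 2 / ‖x - y‖ ^ ((N : ℝ) + 2 * s) ≤ (u x) ^ 2 * g (x - y) := by
      intro x y hy
      by_cases hx : x ∈ tsupport u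
      · have hx' := hsupp hx
        rw [mem_closedBall_zero_iff] at hx'
        have hy' : 1 ≤ ‖y‖ := by simpa [unitBall] using hy
        have hxy : δ ≤ ‖x - y‖ := by
          have := norm_sub_norm_le y x
          rw [norm_sub_rev] at this; linarith
        rw [div_eq_mul_one_div, auxKer_far N s δ hδ0 _ hxy]
      · rw [image_eq_zero_of_notMem_tsupport hx]; simp
    rintro ⟨x, y⟩
    have n1 := mul_nonneg (sq_nonneg (u y)) (hgnn (x - y))
    have n2 := mul_nonneg (sq_nonneg (u x)) (hgnn (y - x))
    by_cases hp : (x, y) ∈ unitBall N ×ˢ unitBall N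
    · rw [Set.indicator_of_mem hp]; dsimp only at *; linarith
    · rw [Set.indicator_of_notMem hp, zero_add]
      simp only [hkdef]
      by_cases hy : y ∈ unitBall N
      · have hx : x ∉ unitBall N := fun hx => hp ⟨hx, hy⟩
        have := far y x hx
        rw [norm_sub_rev, hgsym x y] at this
        rw [hout x hx] at *
        simp only [zero_sub, even_two, Even.neg_pow] at *
        linarith
      · have := far x y hy
        rw [← hgsym x y] at this
        rw [hout y hy] at *
        simp only [sub_zero] at *
        linarith
  have i12 : Integrable (fun p : Euc N × Euc N =>
      (u p.2) ^ 2 * g (p.1 - p.2) + (u p.1) ^ 2 * g (p.2 - p.1)) := i1.add i2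
  have hint : ∫ p, k p ≤ (∫ p in unitBall N ×ˢ unitBall N, k p) +
      2 * ((∫ x, (u x) ^ 2) * ∫ z, g z) := by
    calc ∫ p, k p ≤ ∫ p, ((unitBall N ×ˢ unitBall N).indicator k p +
      ((u p.2) ^ 2 * g (p.1 - p.2) + (u p.1) ^ 2 * g (p.2 - p.1))) :=
          integral_mono hk ((hk.indicator hBB).add i12) hpt
      _ = _ := by
          rw [integral_add (hk.indicator hBB) i12, integral_add i1 i2, e1, e2,
            integral_indicator hBB]
          ring
  have hQ1 : gagliardo N s Set.univ u = cNs N s / 2 * ∫ p, k p := by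
    unfold gagliardo
    simp only [Measure.restrict_univ]
    congr 1
    exact (integral_prod k hk).symm
  have hQ2 : gagliardo N s (unitBall N) u =
      cNs N s / 2 * ∫ p in unitBall N ×ˢ unitBall N, k p := by
    unfold gagliardo
    congr 1
    exact (setIntegral_prod k hk.integrableOn).symm
  have hc := cNs_pos N s hs
  rw [hQ1, hQ2, hu2B]
  rw [hgint] at hint
  have := mul_le_mul_of_nonneg_left hint (by positivity : 0 ≤ cNs N s / 2)
  refine this.trans (le_of_eq ?_)
  ring

lemma gagliardo_nonneg (N : ℕ) (s : ℝ) (hs : s ∈ Set.Ioo (1/2 : ℝ) 1) (U : Set (Euc N))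
    (u : Euc N → ℝ) : 0 ≤ gagliardo N s U u := by
  have hc := cNs_pos N s hs
  unfold gagliardo
  refine mul_nonneg (by positivity) ?_
  refine integral_nonneg fun x => integral_nonneg fun y => ?_
  positivity

lemma sobolev_ineq (N : ℕ) (s : ℝ) (hs : s ∈ Set.Ioo (1/2 : ℝ) 1)
    (hp : critExp N s ≠ 0)
    (u : Euc N → ℝ) (hu : testFun N Set.univ u) :
    sobolevConst N s Set.univ * (lpNormOn N (critExp N s) Set.univ u) ^ 2 ≤
      gagliardo N s Set.univ u := by
  by_cases h0 : lpNormOn N (critExp N s) Set.univ u = 0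
  · rw [h0]
    simpa using gagliardo_nonneg N s hs Set.univ u
  by_cases hz : ∀ x, u x = 0
  · exact absurd (by simp [lpNormOn, hz, hp]) h0
  · have hpos : 0 < (lpNormOn N (critExp N s) Set.univ u) ^ 2 := by positivity
    rw [← le_div_iff₀ hpos]
    apply csInf_le
    · refine ⟨0, ?_⟩
      rintro r ⟨v, -, -, rfl⟩
      exact div_nonneg (gagliardo_nonneg N s hs _ _) (sq_nonneg _)
    · exact ⟨u, hu, hz, rfl⟩

/-- for radial test functions supported in the closed ball of radius ρ < 1,
Q_{N,s,B}(u) ≥ S_{N,s}(ℝ^N)‖u‖²_{2*_s} − K_ρ‖u‖²_{L²} with K_ρ = a_{N,s}(1−ρ)^{−2s}. -/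
theorem statement12 (N : ℕ) (hN : 2 ≤ N) (s : ℝ) (hs : s ∈ Set.Ioo (1/2 : ℝ) 1) :
    ∃ a : ℝ, 0 < a ∧ ∀ ρ ∈ Set.Ioo (0 : ℝ) 1,
      0 < a * (1 - ρ) ^ (-(2 * s)) ∧
      ∀ u : Euc N → ℝ, testFun N (unitBall N) u → IsRadial N u →
        tsupport u ⊆ Metric.closedBall (0 : Euc N) ρ →
        gagliardo N s (unitBall N) u ≥
          sobolevConst N s Set.univ * (lpNormOn N (critExp N s) (unitBall N) u) ^ 2 -
            (a * (1 - ρ) ^ (-(2 * s))) * ∫ x in unitBall N, (u x) ^ 2 := by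
  have hN' : (2 : ℝ) ≤ N := by exact_mod_cast hN
  have hp : 0 < critExp N s := by
    unfold critExp
    have := hs.2
    apply div_pos <;> linarith
  have hc := cNs_pos N s hs
  have hI : 0 ≤ ∫ z, auxKer N s z := integral_nonneg (auxKer_nonneg N s)
  refine ⟨cNs N s * (∫ z, auxKer N s z) + 1, by positivity, fun ρ hρ => ?_⟩
  have hδ0 : 0 < 1 - ρ := by have := hρ.2; linarith
  refine ⟨by positivity, fun u hu _ hsupp => ?_⟩
  have h1 := gag_compare N hN s hs ρ hρ u hu hsupp
  have h2 := sobolev_ineq N s hs hp.ne' u ⟨hu.1, hu.2.1, subset_univ _⟩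
  have h3 : lpNormOn N (critExp N s) Set.univ u = lpNormOn N (critExp N s) (unitBall N) u := by
    unfold lpNormOn
    congr 1
    rw [Measure.restrict_univ]
    symm
    apply setIntegral_eq_integral_of_forall_compl_eq_zero
    intro x hx
    rw [image_eq_zero_of_notMem_tsupport fun h => hx (hu.2.2 h)]
    simp [hp.ne']
  rw [h3] at h2
  have h4 : 0 ≤ (1 - ρ) ^ (-(2 * s)) * ∫ x in unitBall N, (u x) ^ 2 :=
    mul_nonneg (by positivity) (integral_nonneg fun x => sq_nonneg _)
  nlinarith [h1, h2, h4]
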